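/- Let γ > 0 and a > 0, and let λ : (−ε₀, ε₀) → ℂ (for some ε₀ > 0) satisfy λ(ξ) = 1 + iγξ − (a² + γ²)ξ²/2 + ψ(ξ) for a continuous function ψ with ψ(ξ)/ξ² → 0 as ξ → 0. For k ∈ ℕ and ε > 0 small define B_ε^k := ∫_0^ε ( λ(ξ)^k/(iξ) + λ(−ξ)^k/(−iξ) ) dξ. Then there exists ε₁ > 0 such that for all 0 < ε < ε₁ one has lim_{k→∞} B_ε^k = π. -/

import Mathlib

/-!
Near `0` the eigenvalue `λ(ξ)` agrees up to `o(ξ²)` with the Gaussian model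
`μ(ξ) = exp (iγξ - a²ξ²/2)`, and for small `ξ ≠ 0` both are bounded in modulus by
`exp (-a²ξ²/4)` (`isLittleO_sub_model`, `exists_radius`).

*Replacing `λ` by `μ`.* Telescoping gives `|λ^k - μ^k| ≤ k |λ - μ| exp (-a²(k-1)ξ²/4)`. After
division by `ξ` this is, for some `c > 0`, `o(1) · k ξ exp (-c k ξ²)` as `ξ → 0`, uniformly in `k`. The kernels
`k ξ exp (-c k ξ²)` have bounded mass and concentrate at `0`, so the integral of the difference
tends to `0` (`tendsto_integral_err`).

*The model.* For `μ` the integrand equals `2 sin(kγξ)/ξ · exp (-a²kξ²/2)`. The part of the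
integral over `(ε, ∞)` is `O(k^{-1/2})`. Over `(0, ∞)`, writing `sin(sξ)/ξ = ∫_0^s cos(uξ) du` and
applying Fubini and the Fourier transform of the Gaussian gives
`∫_0^∞ sin(sξ)/ξ · exp (-bξ²) dξ = √π ∫_0^{s/(2√b)} exp (-v²) dv` (`integral_sinc_gaussian`).
With `s = kγ` and `b = a²k/2` the upper limit is of order `√k`, so this converges to
`√π · √π/2 = π/2`.
-/

noncomputable section
open MeasureTheory Filter Topology Complex
namespace Paper

lemma norm_pow_sub_pow_le {x y : ℂ} {r : ℝ} (hx : ‖x‖ ≤ r) (hy : ‖y‖ ≤ r) (n : ℕ) :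
    ‖x ^ (n + 1) - y ^ (n + 1)‖ ≤ (n + 1) * ‖x - y‖ * r ^ n := by
  have hr : 0 ≤ r := (norm_nonneg x).trans hx
  induction n with
  | zero => simp
  | succ n ih =>
    have h : x ^ (n + 1 + 1) - y ^ (n + 1 + 1)
        = x * (x ^ (n + 1) - y ^ (n + 1)) + (x - y) * y ^ (n + 1) := by ring
    calc ‖x ^ (n + 1 + 1) - y ^ (n + 1 + 1)‖
        ≤ ‖x‖ * ‖x ^ (n + 1) - y ^ (n + 1)‖ + ‖x - y‖ * ‖y‖ ^ (n + 1) := by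
          rw [h, ← norm_mul, ← norm_pow, ← norm_mul]
          exact norm_add_le _ _
      _ ≤ r * ((n + 1) * ‖x - y‖ * r ^ n) + ‖x - y‖ * r ^ (n + 1) := by gcongr
      _ = (↑(n + 1) + 1) * ‖x - y‖ * r ^ (n + 1) := by push_cast; ring

/-! ### The Dirichlet integral with a Gaussian cutoff -/

lemma integral_cos_mul_gaussian_Ioi {b : ℝ} (hb : 0 < b) (u : ℝ) :
    ∫ x in Set.Ioi (0 : ℝ), Real.cos (u * x) * Real.exp (-b * x ^ 2)
      = √(Real.pi / b) / 2 * Real.exp (-u ^ 2 / (4 * b)) := by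
  have h1 := integral_comp_abs (f := fun x => Real.cos (u * x) * Real.exp (-b * x ^ 2))
  have h2 : ∀ x : ℝ, Real.cos (u * |x|) * Real.exp (-b * |x| ^ 2)
      = (cexp (I * u * x) * cexp (-b * x ^ 2)).re := by
    intro x
    have e1 : cexp (-b * x ^ 2) = ((Real.exp (-b * x ^ 2) : ℝ) : ℂ) := by push_cast; rfl
    have e2 : I * (u : ℂ) * x = ((u * x : ℝ) : ℂ) * I := by push_cast; ring
    rw [e1, e2, Complex.re_mul_ofReal, Complex.exp_ofReal_mul_I_re, sq_abs]
    congr 1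
    rcases abs_choice x with h | h <;> simp [h]
  have hbc : 0 < (b : ℂ).re := by simpa using hb
  have h3 := fourierIntegral_gaussian hbc (u : ℂ)
  have hint : Integrable (fun x : ℝ => cexp (I * u * x) * cexp (-b * x ^ 2)) := by
    refine (integrable_exp_neg_mul_sq hb).mono' (by fun_prop) (ae_of_all _ fun x => ?_)
    have e1 : cexp (-b * x ^ 2) = ((Real.exp (-b * x ^ 2) : ℝ) : ℂ) := by push_cast; rfl
    have e2 : I * (u : ℂ) * x = ((u * x : ℝ) : ℂ) * I := by push_cast; ring
    rw [e1, e2, norm_mul, Complex.norm_exp_ofReal_mul_I, Complex.norm_real, one_mul,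
      Real.norm_of_nonneg (Real.exp_pos _).le]
  have h4 : ∫ x : ℝ, (cexp (I * u * x) * cexp (-b * x ^ 2)).re
      = √(Real.pi / b) * Real.exp (-u ^ 2 / (4 * b)) := by
    have := integral_re (𝕜 := ℂ) hint
    simp only [RCLike.re_eq_complex_re] at this
    rw [this, h3, Real.sqrt_eq_rpow]
    have e : ((Real.pi : ℂ) / b) ^ (1 / 2 : ℂ) * cexp (-(u : ℂ) ^ 2 / (4 * b))
        = (((Real.pi / b) ^ (1 / 2 : ℝ) * Real.exp (-u ^ 2 / (4 * b)) : ℝ) : ℂ) := by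
      rw [Complex.ofReal_mul, Complex.ofReal_cpow (by positivity)]
      push_cast
      rfl
    rw [e, Complex.ofReal_re]
  simp only [h2] at h1
  rw [h4] at h1
  linarith

/-- Both sides are `sin(sx)/x` for `x ≠ 0`; using `sinc` keeps the function continuous at `0`. -/
lemma mul_sinc_eq_integral (s x : ℝ) :
    s * Real.sinc (s * x) = ∫ u in (0 : ℝ)..s, Real.cos (u * x) := by
  by_cases hx : x = 0
  · simp [hx]
  · rw [intervalIntegral.integral_comp_mul_right _ hx, integral_cos]
    by_cases hs : s = 0
    · simp [hs]
    · rw [Real.sinc_of_ne_zero (mul_ne_zero hs hx)]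
      simp
      field_simp

/-- Obtained from `mul_sinc_eq_integral` by exchanging the two integrations. -/
lemma integral_sinc_gaussian {b : ℝ} (hb : 0 < b) (s : ℝ) :
    ∫ x in Set.Ioi (0 : ℝ), s * Real.sinc (s * x) * Real.exp (-b * x ^ 2)
      = √Real.pi * ∫ v in (0 : ℝ)..(s / (2 * √b)), Real.exp (-1 * v ^ 2) := by
  have hsb : 0 < √b := Real.sqrt_pos.mpr hb
  have hint : Integrable
      (Function.uncurry fun u x : ℝ => Real.cos (u * x) * Real.exp (-b * x ^ 2))
      ((volume.restrict (Set.uIoc 0 s)).prod (volume.restrict (Set.Ioi (0 : ℝ)))) := by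
    have h1 : Integrable (fun _ : ℝ => (1 : ℝ)) (volume.restrict (Set.uIoc 0 s)) :=
      (continuous_const.intervalIntegrable 0 s).def'
    have h2 := h1.mul_prod (integrable_exp_neg_mul_sq hb).integrableOn.integrable
      (ν := volume.restrict (Set.Ioi (0 : ℝ)))
    refine h2.mono' (Continuous.aestronglyMeasurable ?_) (ae_of_all _ fun p => ?_)
    · simp only [Function.uncurry_def]; fun_prop
    · simp only [Function.uncurry_def, norm_mul, Real.norm_eq_abs, Real.abs_exp]
      gcongr
      exact Real.abs_cos_le_one _
  calc ∫ x in Set.Ioi (0 : ℝ), s * Real.sinc (s * x) * Real.exp (-b * x ^ 2)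
      = ∫ x in Set.Ioi (0 : ℝ), ∫ u in (0 : ℝ)..s, Real.cos (u * x) * Real.exp (-b * x ^ 2) := by
        simp only [mul_sinc_eq_integral, intervalIntegral.integral_mul_const]
    _ = ∫ u in (0 : ℝ)..s, ∫ x in Set.Ioi (0 : ℝ), Real.cos (u * x) * Real.exp (-b * x ^ 2) :=
        (intervalIntegral_integral_swap hint).symm
    _ = ∫ u in (0 : ℝ)..s, √(Real.pi / b) / 2 * Real.exp (-1 * (u / (2 * √b)) ^ 2) := by
        simp only [integral_cos_mul_gaussian_Ioi hb]
        refine intervalIntegral.integral_congr fun u _ => ?_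
        have e : -1 * (u / (2 * √b)) ^ 2 = -u ^ 2 / (4 * b) := by
          rw [div_pow, mul_pow, Real.sq_sqrt hb.le]
          ring
        simp only [e]
    _ = _ := by
        rw [intervalIntegral.integral_const_mul,
          intervalIntegral.integral_comp_div (fun v => Real.exp (-1 * v ^ 2)) (by positivity),
          zero_div, smul_eq_mul, Real.sqrt_div Real.pi_pos.le]
        field_simp

lemma tendsto_integral_gaussian :
    Tendsto (fun T : ℝ => √Real.pi * ∫ v in (0 : ℝ)..T, Real.exp (-1 * v ^ 2)) atTop
      (𝓝 (Real.pi / 2)) := by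
  have h := (intervalIntegral_tendsto_integral_Ioi (0 : ℝ)
    (integrable_exp_neg_mul_sq one_pos).integrableOn tendsto_id).const_mul √Real.pi
  rw [integral_gaussian_Ioi, div_one, ← mul_div_assoc, Real.mul_self_sqrt Real.pi_pos.le] at h
  exact h

/-- Half of the integral of the Gaussian model: the integral over `(0, ∞)` converges to `π/2`,
and the part over `(ε, ∞)` vanishes in the limit because `|sin(kγx)/x| ≤ 1/ε` there. -/
lemma tendsto_main_term {γ a ε : ℝ} (hγ : 0 < γ) (ha : 0 < a) (hε : 0 < ε) :
    Tendsto (fun k : ℕ => ∫ x in (0 : ℝ)..ε,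
        (k * γ) * Real.sinc (k * γ * x) * Real.exp (-(a ^ 2 * k / 2) * x ^ 2))
      atTop (𝓝 (Real.pi / 2)) := by
  set f : ℕ → ℝ → ℝ := fun k x =>
    (k * γ) * Real.sinc (k * γ * x) * Real.exp (-(a ^ 2 * k / 2) * x ^ 2) with hf
  have hcont : ∀ k, Continuous (f k) := fun k => by
    have := Real.continuous_sinc
    fun_prop
  have hb : ∀ k : ℕ, 0 < k → 0 < a ^ 2 * k / 2 := fun k hk => by positivity
  have hfint : ∀ k : ℕ, 0 < k → Integrable (f k) := fun k hk => by
    refine ((integrable_exp_neg_mul_sq (hb k hk)).const_mul (k * γ)).mono'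
      (hcont k).aestronglyMeasurable (ae_of_all _ fun x => ?_)
    simp only [hf, norm_mul, Real.norm_eq_abs, Real.abs_exp, abs_of_pos hγ, Nat.abs_cast]
    refine mul_le_mul_of_nonneg_right ?_ (Real.exp_pos _).le
    exact mul_le_of_le_one_right (by positivity) (Real.abs_sinc_le_one _)
  have hfull : Tendsto (fun k : ℕ => ∫ x in Set.Ioi (0 : ℝ), f k x) atTop (𝓝 (Real.pi / 2)) := by
    have hT : Tendsto (fun k : ℕ => k * γ / (2 * √(a ^ 2 * k / 2))) atTop atTop := by
      have h1 : Tendsto (fun k : ℕ => γ / (√2 * a) * √(k : ℝ)) atTop atTop :=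
        (Real.tendsto_sqrt_atTop.comp tendsto_natCast_atTop_atTop).const_mul_atTop (by positivity)
      refine h1.congr' ?_
      filter_upwards [eventually_gt_atTop 0] with k hk
      have hk' : (0 : ℝ) < k := by exact_mod_cast hk
      have h2 : √(a ^ 2 * k / 2) = a * √k / √2 := by
        rw [Real.sqrt_div (by positivity), Real.sqrt_mul (by positivity), Real.sqrt_sq ha.le]
      rw [h2]
      have h3 := Real.sq_sqrt hk'.le
      have h4 := Real.sq_sqrt (show (0 : ℝ) ≤ 2 by norm_num)
      field_simp
      rw [h3, h4, mul_comm]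
    refine (tendsto_integral_gaussian.comp hT).congr' ?_
    filter_upwards [eventually_gt_atTop 0] with k hk
    exact (integral_sinc_gaussian (hb k hk) (k * γ)).symm
  have htail : Tendsto (fun k : ℕ => ∫ x in Set.Ioi ε, f k x) atTop (𝓝 0) := by
    have hbd : Tendsto (fun k : ℕ => ε⁻¹ * (√(Real.pi / (a ^ 2 * k / 2)) / 2)) atTop (𝓝 0) := by
      have h1 : Tendsto (fun k : ℕ => a ^ 2 * (k : ℝ) / 2) atTop atTop :=
        (tendsto_natCast_atTop_atTop.const_mul_atTop (by positivity)).atTop_div_const (by norm_num)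
      have h2 := (Real.continuous_sqrt.tendsto 0).comp (h1.const_div_atTop Real.pi)
      simpa using (h2.div_const 2).const_mul ε⁻¹
    refine squeeze_zero_norm' ?_ hbd
    filter_upwards [eventually_gt_atTop 0] with k hk
    have hk' : (0 : ℝ) < k := by exact_mod_cast hk
    have hgi := (integrable_exp_neg_mul_sq (hb k hk)).const_mul ε⁻¹
    calc ‖∫ x in Set.Ioi ε, f k x‖
        ≤ ∫ x in Set.Ioi ε, ε⁻¹ * Real.exp (-(a ^ 2 * k / 2) * x ^ 2) := by
          refine norm_integral_le_of_norm_le hgi.integrableOn ?_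
          filter_upwards [ae_restrict_mem measurableSet_Ioi] with x hx
          have hx0 : 0 < x := hε.trans hx
          have hxe : x⁻¹ ≤ ε⁻¹ := inv_anti₀ hε (le_of_lt hx)
          have hs : k * γ * Real.sinc (k * γ * x) = Real.sin (k * γ * x) * x⁻¹ := by
            rw [Real.sinc_of_ne_zero (by positivity)]
            field_simp
          simp only [hf, hs, norm_mul, Real.norm_eq_abs, Real.abs_exp, abs_inv, abs_of_pos hx0]
          gcongr
          calc |Real.sin (k * γ * x)| * x⁻¹ ≤ 1 * ε⁻¹ := by
                gcongr
                exact Real.abs_sin_le_one _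
            _ = ε⁻¹ := one_mul _
      _ ≤ ∫ x in Set.Ioi (0 : ℝ), ε⁻¹ * Real.exp (-(a ^ 2 * k / 2) * x ^ 2) := by
          refine setIntegral_mono_set hgi.integrableOn (ae_of_all _ fun x => ?_)
            (Set.Ioi_subset_Ioi hε.le).eventuallyLE
          simp only [Pi.zero_apply]
          positivity
      _ = ε⁻¹ * (√(Real.pi / (a ^ 2 * k / 2)) / 2) := by
          rw [integral_const_mul, integral_gaussian_Ioi]
  have := hfull.sub htail
  rw [sub_zero] at this
  refine this.congr' ?_
  filter_upwards [eventually_gt_atTop 0] with k hk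
  rw [intervalIntegral.integral_Ioi_sub_Ioi (hfint k hk).integrableOn hε.le]

/-! ### Comparison of the eigenvalue with the Gaussian model -/

/-- The Gaussian model `exp (iγξ - a²ξ²/2)` of the eigenvalue. -/
def model (γ a ξ : ℝ) : ℂ := cexp (I * γ * ξ - (a : ℂ) ^ 2 * ξ ^ 2 / 2)

lemma norm_model (γ a ξ : ℝ) : ‖model γ a ξ‖ = Real.exp (-(a ^ 2 * ξ ^ 2 / 2)) := by
  rw [model, Complex.norm_exp]
  congr 1
  have e : I * (γ : ℂ) * ξ - (a : ℂ) ^ 2 * ξ ^ 2 / 2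
      = ((-(a ^ 2 * ξ ^ 2 / 2) : ℝ) : ℂ) + ((γ * ξ : ℝ) : ℂ) * I := by push_cast; ring
  rw [e, Complex.add_re, Complex.ofReal_re, Complex.re_ofReal_mul, Complex.I_re, mul_zero, add_zero]

lemma continuous_model (γ a : ℝ) : Continuous (model γ a) := by
  unfold model
  fun_prop

lemma model_pow_combination (γ a : ℝ) (k : ℕ) {ξ : ℝ} (hξ : ξ ≠ 0) :
    model γ a ξ ^ k / (I * ξ) + model γ a (-ξ) ^ k / (-(I * ξ))
      = ((2 * ((k * γ) * Real.sinc (k * γ * ξ) *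
          Real.exp (-(a ^ 2 * k / 2) * ξ ^ 2)) : ℝ) : ℂ) := by
  have hξ' : (ξ : ℂ) ≠ 0 := by exact_mod_cast hξ
  have hs : k * γ * Real.sinc (k * γ * ξ) = Real.sin (k * γ * ξ) / ξ := by
    by_cases h : k * γ = 0
    · simp [h]
    · rw [Real.sinc_of_ne_zero (mul_ne_zero h hξ), ← mul_div_assoc, mul_div_mul_left _ _ h]
  have e1 : model γ a ξ ^ k
      = cexp ((k * γ * ξ : ℂ) * I) * cexp (-(a ^ 2 * k / 2) * ξ ^ 2) := by
    rw [model, ← Complex.exp_nat_mul, ← Complex.exp_add]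
    congr 1
    ring
  have e2 : model γ a (-ξ) ^ k
      = cexp (-(k * γ * ξ : ℂ) * I) * cexp (-(a ^ 2 * k / 2) * ξ ^ 2) := by
    rw [model, ← Complex.exp_nat_mul, ← Complex.exp_add]
    congr 1
    push_cast
    ring
  rw [hs, e1, e2]
  push_cast
  rw [Complex.sin]
  field_simp
  ring_nf
  simp only [I_sq]
  ring

/-- The model has the same second order Taylor polynomial as `lam`: the square of `iγξ` in the
exponential series accounts for the `γ²` in the quadratic coefficient. -/
lemma isLittleO_sub_model {γ a ε₀ : ℝ} (hε₀ : 0 < ε₀) {lam ψ : ℝ → ℂ}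
    (hψsmall : Tendsto (fun ξ : ℝ => ψ ξ / (ξ : ℂ) ^ 2) (𝓝[≠] (0 : ℝ)) (𝓝 0))
    (hlam : ∀ ξ ∈ Set.Ioo (-ε₀) ε₀,
      lam ξ = 1 + Complex.I * γ * ξ - ((a : ℂ) ^ 2 + (γ : ℂ) ^ 2) * ξ ^ 2 / 2 + ψ ξ) :
    (fun ξ => lam ξ - model γ a ξ) =o[𝓝[≠] (0 : ℝ)] fun ξ : ℝ => (ξ : ℂ) ^ 2 := by
  have hψ : ψ =o[𝓝[≠] (0 : ℝ)] fun ξ : ℝ => (ξ : ℂ) ^ 2 := by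
    rw [Asymptotics.isLittleO_iff_tendsto']
    · exact hψsmall
    · filter_upwards [self_mem_nhdsWithin] with ξ hξ h
      exact absurd h (pow_ne_zero _ (by exact_mod_cast hξ))
  have hcoe : Tendsto (fun ξ : ℝ => (ξ : ℂ)) (𝓝[≠] (0 : ℝ)) (𝓝 0) :=
    (Complex.continuous_ofReal.tendsto' 0 0 rfl).mono_left nhdsWithin_le_nhds
  have hcube : (fun ξ : ℝ => (ξ : ℂ) ^ 3) =o[𝓝[≠] (0 : ℝ)] fun ξ : ℝ => (ξ : ℂ) ^ 2 :=
    (Asymptotics.isLittleO_pow_pow (𝕜 := ℂ) (show 2 < 3 by norm_num)).comp_tendsto hcoe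
  have hfac : (fun ξ : ℝ => I * (γ : ℂ) - (a : ℂ) ^ 2 * ξ / 2)
      =O[𝓝[≠] (0 : ℝ)] fun _ => (1 : ℂ) := by
    refine Tendsto.isBigO_one (c := I * γ) ℂ ?_
    exact (Continuous.tendsto' (by fun_prop) _ _ (by simp)).mono_left nhdsWithin_le_nhds
  have hz : (fun ξ : ℝ => I * (γ : ℂ) * ξ - (a : ℂ) ^ 2 * ξ ^ 2 / 2)
      =O[𝓝[≠] (0 : ℝ)] fun ξ : ℝ => (ξ : ℂ) := by
    have := (Asymptotics.isBigO_refl (fun ξ : ℝ => (ξ : ℂ)) (𝓝[≠] (0 : ℝ))).mul hfac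
    refine this.congr (fun ξ => by ring) (fun ξ => by ring)
  have hexp := ((Complex.exp_sub_sum_range_isBigO_pow 3).comp_tendsto
    (hz.trans_tendsto hcoe)).trans (hz.pow 3) |>.trans_isLittleO hcube
  have hrem : (fun ξ : ℝ => (ξ : ℂ) ^ 3 * (I * γ * a ^ 2 / 2 - a ^ 4 * ξ / 8))
      =o[𝓝[≠] (0 : ℝ)] fun ξ : ℝ => (ξ : ℂ) ^ 2 := by
    have h1 : (fun ξ : ℝ => (I * γ * a ^ 2 / 2 - a ^ 4 * ξ / 8 : ℂ))
        =O[𝓝[≠] (0 : ℝ)] fun _ => (1 : ℂ) := by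
      refine Tendsto.isBigO_one (c := I * γ * a ^ 2 / 2) ℂ ?_
      exact (Continuous.tendsto' (by fun_prop) _ _ (by simp)).mono_left nhdsWithin_le_nhds
    exact (hcube.mul_isBigO h1).congr_right (fun ξ => by ring)
  refine ((hψ.sub hexp).add hrem).congr' ?_ EventuallyEq.rfl
  filter_upwards [nhdsWithin_le_nhds (Ioo_mem_nhds (neg_lt_zero.mpr hε₀) hε₀)] with ξ hξ
  rw [hlam ξ hξ, model]
  simp only [Function.comp_def, Finset.sum_range_succ, Finset.sum_range_zero, Nat.factorial]
  push_cast
  ring_nf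
  simp only [I_sq]
  ring

/-- A radius on which `lam` and the model are dominated by `exp (-a²ξ²/4)`. The model itself has
modulus `exp (-a²ξ²/2)`; half of the exponent is given up to absorb the error. The point `0` is
excluded since the little-o hypothesis says nothing about `lam 0`. -/
lemma exists_radius {γ a ε₀ : ℝ} (ha : 0 < a) (hε₀ : 0 < ε₀) {lam : ℝ → ℂ}
    (h : (fun ξ => lam ξ - model γ a ξ) =o[𝓝[≠] (0 : ℝ)] fun ξ : ℝ => (ξ : ℂ) ^ 2) :
    ∃ ε₁ : ℝ, 0 < ε₁ ∧ ε₁ ≤ ε₀ ∧ ∀ ξ : ℝ, ξ ≠ 0 → |ξ| < ε₁ →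
      ‖lam ξ - model γ a ξ‖ ≤ a ^ 2 / 8 * ξ ^ 2 ∧
      ‖lam ξ‖ ≤ Real.exp (-(a ^ 2 / 4 * ξ ^ 2)) ∧
      ‖model γ a ξ‖ ≤ Real.exp (-(a ^ 2 / 4 * ξ ^ 2)) := by
  have h1 := h.bound (show 0 < a ^ 2 / 8 by positivity)
  rw [eventually_nhdsWithin_iff, Metric.eventually_nhds_iff] at h1
  obtain ⟨r, hr, hb⟩ := h1
  refine ⟨min (min r ε₀) a⁻¹, by positivity, (min_le_left _ _).trans (min_le_right _ _), ?_⟩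
  intro ξ hξ hlt
  have hξr : |ξ| < r := hlt.trans_le ((min_le_left _ _).trans (min_le_left _ _))
  have hξa : |ξ| < a⁻¹ := hlt.trans_le (min_le_right _ _)
  have hd : ‖lam ξ - model γ a ξ‖ ≤ a ^ 2 / 8 * ξ ^ 2 := by
    simpa using hb (by simpa [Real.dist_eq] using hξr) hξ
  set y : ℝ := a ^ 2 / 4 * ξ ^ 2 with hy
  have hy0 : 0 ≤ y := by positivity
  have hy1 : y ≤ 1 / 4 := by
    have h2 : a * |ξ| ≤ 1 := by
      calc a * |ξ| ≤ a * a⁻¹ := by gcongr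
        _ = 1 := mul_inv_cancel₀ ha.ne'
    have h3 : (a * |ξ|) ^ 2 ≤ 1 := pow_le_one₀ (by positivity) h2
    rw [mul_pow, sq_abs] at h3
    rw [hy]; linarith
  have hm : ‖model γ a ξ‖ = Real.exp (-y) * Real.exp (-y) := by
    rw [norm_model, ← Real.exp_add, hy]
    congr 1
    ring
  have hE1 : Real.exp (-y) ≤ 1 := Real.exp_le_one_iff.mpr (by linarith)
  have hE0 := Real.exp_pos (-y)
  refine ⟨hd, ?_, ?_⟩
  · -- With `E = exp (-y)`: `1 - E ≥ E y`, so `E - E² ≥ E² y ≥ (1 - y)² y ≥ y / 2` for `y ≤ 1/4`.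
    have hElow : 1 - y ≤ Real.exp (-y) := by
      have := Real.add_one_le_exp (-y); linarith
    have hEup : Real.exp (-y) * (1 + y) ≤ 1 := by
      have h5 := Real.add_one_le_exp y
      calc Real.exp (-y) * (1 + y) ≤ Real.exp (-y) * Real.exp y := by
            gcongr; linarith
        _ = 1 := by rw [← Real.exp_add]; simp
    have htri : ‖lam ξ‖ ≤ ‖model γ a ξ‖ + ‖lam ξ - model γ a ξ‖ := by
      have := norm_add_le (model γ a ξ) (lam ξ - model γ a ξ)
      simpa using this
    have hd' : ‖lam ξ - model γ a ξ‖ ≤ y / 2 := by rw [hy]; linarith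
    rw [hm] at htri
    nlinarith [mul_le_mul_of_nonneg_left hEup hE0.le, mul_nonneg hy0 hE0.le,
      mul_nonneg hy0 (mul_nonneg hE0.le hE0.le), mul_self_nonneg (Real.exp (-y) - (1 - y)),
      mul_le_mul hElow hElow (by linarith) hE0.le]
  · rw [hm]
    nlinarith

/-! ### The error made by passing to the model -/

/-- The difference of the integrands of `B_ε^k` for `lam` and for `μ`. -/
def err (lam μ : ℝ → ℂ) (k : ℕ) (ξ : ℝ) : ℂ :=
  (lam ξ ^ k - μ ξ ^ k) / (I * ξ) + (lam (-ξ) ^ k - μ (-ξ) ^ k) / (-(I * ξ))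

/-- The hypothesis concerns the two points `±ξ`. The decay rate drops from `c` to `c / 2` because
telescoping leaves the exponent `k - 1`, and `k - 1 ≥ k / 2` for `k ≥ 2`. -/
lemma norm_err_le {lam μ : ℝ → ℂ} {c δ ξ : ℝ} (hc : 0 < c) (hξ : 0 < ξ)
    (h1 : ∀ x : ℝ, |x| = ξ → ‖lam x - μ x‖ ≤ δ * ξ ^ 2 ∧
      ‖lam x‖ ≤ Real.exp (-(c * ξ ^ 2)) ∧ ‖μ x‖ ≤ Real.exp (-(c * ξ ^ 2)))
    {k : ℕ} (hk : 2 ≤ k) :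
    ‖err lam μ k ξ‖ ≤ 2 * δ * (k * ξ * Real.exp (-(c / 2 * k * ξ ^ 2))) := by
  have key : ∀ x : ℝ, |x| = ξ →
      ‖lam x ^ k - μ x ^ k‖ / ξ ≤ δ * (k * ξ * Real.exp (-(c / 2 * k * ξ ^ 2))) := by
    intro x hx
    obtain ⟨hd, hl, hm⟩ := h1 x hx
    have hδ : 0 ≤ δ * ξ ^ 2 := (norm_nonneg _).trans hd
    obtain ⟨n, rfl⟩ : ∃ n, k = n + 1 := ⟨k - 1, by omega⟩
    have hn : (1 : ℝ) ≤ n := by exact_mod_cast (by omega : 1 ≤ n)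
    have hexp : Real.exp (-(c * ξ ^ 2)) ^ n ≤ Real.exp (-(c / 2 * ↑(n + 1) * ξ ^ 2)) := by
      rw [← Real.exp_nat_mul, Real.exp_le_exp]
      push_cast
      nlinarith [mul_nonneg (mul_pos hc (pow_pos hξ 2)).le (sub_nonneg.mpr hn)]
    rw [div_le_iff₀ hξ]
    calc ‖lam x ^ (n + 1) - μ x ^ (n + 1)‖
        ≤ (n + 1) * ‖lam x - μ x‖ * Real.exp (-(c * ξ ^ 2)) ^ n := norm_pow_sub_pow_le hl hm n
      _ ≤ (n + 1) * (δ * ξ ^ 2) * Real.exp (-(c / 2 * ↑(n + 1) * ξ ^ 2)) := by gcongr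
      _ = δ * (↑(n + 1) * ξ * Real.exp (-(c / 2 * ↑(n + 1) * ξ ^ 2))) * ξ := by
          push_cast; ring
  have hden : ‖I * (ξ : ℂ)‖ = ξ := by simp [abs_of_pos hξ]
  calc ‖err lam μ k ξ‖
      ≤ ‖lam ξ ^ k - μ ξ ^ k‖ / ξ + ‖lam (-ξ) ^ k - μ (-ξ) ^ k‖ / ξ := by
        refine (norm_add_le _ _).trans_eq ?_
        rw [norm_div, norm_div, norm_neg, hden]
    _ ≤ _ := by
        have a1 := key ξ (abs_of_pos hξ)
        have a2 := key (-ξ) (by rw [abs_neg, abs_of_pos hξ])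
        linarith

lemma integral_gaussian_density_le {c ε δ : ℝ} (hc : 0 < c) (hδ : 0 ≤ δ) {k : ℕ} (hk : 0 < k) :
    ∫ ξ in (0 : ℝ)..ε, 2 * δ * (k * ξ * Real.exp (-(c / 2 * k * ξ ^ 2))) ≤ 2 * δ / c := by
  have hk' : (0 : ℝ) < k := by exact_mod_cast hk
  have hd : ∀ x ∈ Set.uIcc 0 ε,
      HasDerivAt (fun ξ : ℝ => -(2 * δ / c) * Real.exp (-(c / 2 * k * ξ ^ 2)))
      (2 * δ * (k * x * Real.exp (-(c / 2 * k * x ^ 2)))) x := by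
    intro x _
    have h1 : HasDerivAt (fun ξ : ℝ => -(c / 2 * k * ξ ^ 2)) (-(c / 2 * k * (2 * x))) x := by
      convert! ((hasDerivAt_pow 2 x).const_mul (c / 2 * k)).neg using 1
      simp
    convert! (h1.exp.const_mul (-(2 * δ / c))) using 1
    field_simp
  rw [intervalIntegral.integral_eq_sub_of_hasDerivAt hd
    (Continuous.intervalIntegrable (by fun_prop) _ _)]
  have h0 : 0 ≤ 2 * δ / c := by positivity
  simp
  positivity

/-- For a given tolerance, the error is controlled near `0` by the smallness of
`(lam - μ) / ξ²` and the bounded mass of the kernels, and away from `0` by the exponential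
decay in `k`. -/
lemma tendsto_integral_err {lam μ : ℝ → ℂ} {c M ε : ℝ} (hc : 0 < c) (hε : 0 < ε) (hM : 0 ≤ M)
    (hbd : ∀ ξ : ℝ, ξ ≠ 0 → |ξ| ≤ ε → ‖lam ξ - μ ξ‖ ≤ M * ξ ^ 2 ∧
      ‖lam ξ‖ ≤ Real.exp (-(c * ξ ^ 2)) ∧ ‖μ ξ‖ ≤ Real.exp (-(c * ξ ^ 2)))
    (h : (fun ξ => lam ξ - μ ξ) =o[𝓝[≠] (0 : ℝ)] fun ξ : ℝ => (ξ : ℂ) ^ 2) :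
    Tendsto (fun k : ℕ => ∫ ξ in (0 : ℝ)..ε, err lam μ k ξ) atTop (𝓝 0) := by
  rw [Metric.tendsto_atTop']
  intro e he
  -- The mass bound `2 * δ / c` for the part near `0` is then `e / 2`.
  set δ : ℝ := c * e / 4 with hδ
  have hδ0 : 0 < δ := by positivity
  have h1 := h.bound hδ0
  rw [eventually_nhdsWithin_iff, Metric.eventually_nhds_iff] at h1
  obtain ⟨η, hη, hb⟩ := h1
  have htail : Tendsto (fun k : ℕ =>
      ε * (2 * M * (k * ε * Real.exp (-(c / 2 * k * η ^ 2))))) atTop (𝓝 0) := by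
    have hr : Real.exp (-(c / 2 * η ^ 2)) < 1 := Real.exp_lt_one_iff.mpr (by
      have : 0 < c / 2 * η ^ 2 := by positivity
      linarith)
    have := (tendsto_self_mul_const_pow_of_lt_one (Real.exp_pos _).le hr).const_mul
      (ε * (2 * M * ε))
    rw [mul_zero] at this
    refine this.congr fun k => ?_
    rw [← Real.exp_nat_mul]
    have : (k : ℝ) * -(c / 2 * η ^ 2) = -(c / 2 * k * η ^ 2) := by ring
    rw [this]
    ring
  obtain ⟨N, hN⟩ := eventually_atTop.mp (htail.eventually_lt_const (half_pos he))
  refine ⟨max N 2, fun k hk => ?_⟩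
  have hk2 : 2 ≤ k := (le_max_right _ _).trans hk.le
  have hkN := hN k ((le_max_left _ _).trans hk.le)
  have hk' : (0 : ℝ) < k := by exact_mod_cast (by omega : 0 < k)
  rw [dist_zero_right]
  set T : ℝ := 2 * M * (k * ε * Real.exp (-(c / 2 * k * η ^ 2))) with hT
  have hT0 : 0 ≤ T := by positivity
  calc ‖∫ ξ in (0 : ℝ)..ε, err lam μ k ξ‖
      ≤ ∫ ξ in (0 : ℝ)..ε, (2 * δ * (k * ξ * Real.exp (-(c / 2 * k * ξ ^ 2))) + T) := by
        refine intervalIntegral.norm_integral_le_of_norm_le hε.le (ae_of_all _ fun ξ hξ => ?_)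
          (Continuous.intervalIntegrable (by fun_prop) _ _)
        have hξ0 := hξ.1
        have hne : ∀ x : ℝ, |x| = ξ → x ≠ 0 := fun x hx h0 => by simp [h0] at hx; linarith
        rcases lt_or_ge ξ η with hlt | hge
        · refine (norm_err_le hc hξ0 (δ := δ) (fun x hx => ?_) hk2).trans (by linarith)
          have hx2 : x ^ 2 = ξ ^ 2 := by rw [← hx, sq_abs]
          obtain ⟨-, h2, h3⟩ := hbd x (hne x hx) (hx.le.trans hξ.2)
          rw [hx2] at h2 h3
          refine ⟨?_, h2, h3⟩
          have := hb (y := x) (by simpa [Real.dist_eq, hx] using hlt) (hne x hx)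
          simpa [hx2, hx] using this
        · refine (norm_err_le hc hξ0 (δ := M) (fun x hx => ?_) hk2).trans ?_
          · have hx2 : x ^ 2 = ξ ^ 2 := by rw [← hx, sq_abs]
            rw [← hx2]
            exact hbd x (hne x hx) (hx.le.trans hξ.2)
          · have : 2 * M * (k * ξ * Real.exp (-(c / 2 * k * ξ ^ 2))) ≤ T := by
              rw [hT]
              have := hξ.2
              gcongr
            have : 0 ≤ 2 * δ * (k * ξ * Real.exp (-(c / 2 * k * ξ ^ 2))) := by positivity
            linarith
    _ = (∫ ξ in (0 : ℝ)..ε, 2 * δ * (k * ξ * Real.exp (-(c / 2 * k * ξ ^ 2)))) + ε * T := by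
        rw [intervalIntegral.integral_add (Continuous.intervalIntegrable (by fun_prop) _ _)
          (Continuous.intervalIntegrable (by fun_prop) _ _)]
        simp
    _ ≤ 2 * δ / c + ε * T := by
        gcongr
        exact integral_gaussian_density_le hc hδ0.le (by omega)
    _ = e / 2 + ε * T := by rw [hδ]; field_simp; ring
    _ < e := by linarith

/-- Asymptotics of `B_ε^k = ∫_0^ε (λ(ξ)^k/(iξ) + λ(−ξ)^k/(−iξ)) dξ` for a
function `λ` with the expansion `λ(ξ) = 1 + iγξ − (a²+γ²)ξ²/2 + ψ(ξ)`, `ψ(ξ) = o(ξ²)`: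
there is `ε₁ > 0` such that `B_ε^k → π` as `k → ∞` for every `0 < ε < ε₁`. -/
theorem leading_eigenvalue_integral_limit
    (γ a ε₀ : ℝ) (hγ : 0 < γ) (ha : 0 < a) (hε₀ : 0 < ε₀)
    (lam : ℝ → ℂ) (ψ : ℝ → ℂ)
    (hψcont : ContinuousOn ψ (Set.Ioo (-ε₀) ε₀))
    (hψsmall : Tendsto (fun ξ : ℝ => ψ ξ / (ξ : ℂ) ^ 2) (𝓝[≠] (0 : ℝ)) (𝓝 0))
    (hlam : ∀ ξ ∈ Set.Ioo (-ε₀) ε₀,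
      lam ξ = 1 + Complex.I * γ * ξ - ((a : ℂ) ^ 2 + (γ : ℂ) ^ 2) * ξ ^ 2 / 2 + ψ ξ) :
    ∃ ε₁ : ℝ, 0 < ε₁ ∧ ε₁ ≤ ε₀ ∧ ∀ ε : ℝ, 0 < ε → ε < ε₁ →
      Tendsto (fun k : ℕ =>
          ∫ ξ in (0 : ℝ)..ε,
            (lam ξ ^ k / (Complex.I * ξ) + lam (-ξ) ^ k / (-(Complex.I * ξ))))
        atTop (𝓝 (Real.pi : ℂ)) := by
  have hsmall := isLittleO_sub_model (γ := γ) (a := a) hε₀ hψsmall hlam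
  obtain ⟨ε₁, hε₁, hle, hbd⟩ := exists_radius ha hε₀ hsmall
  refine ⟨ε₁, hε₁, hle, fun ε hε hlt => ?_⟩
  have hlamc : ContinuousOn lam (Set.Ioo (-ε₀) ε₀) := by
    refine ContinuousOn.congr (f := fun ξ : ℝ =>
      1 + Complex.I * γ * ξ - ((a : ℂ) ^ 2 + (γ : ℂ) ^ 2) * ξ ^ 2 / 2 + ψ ξ) ?_ hlam
    exact ContinuousOn.add (Continuous.continuousOn (by fun_prop)) hψcont
  have herr := tendsto_integral_err (c := a ^ 2 / 4) (M := a ^ 2 / 8) (by positivity) hε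
    (by positivity) (fun ξ h0 h1 => hbd ξ h0 (h1.trans_lt hlt)) hsmall
  have hmain : Tendsto (fun k : ℕ => ((2 * ∫ x in (0 : ℝ)..ε,
      (k * γ) * Real.sinc (k * γ * x) * Real.exp (-(a ^ 2 * k / 2) * x ^ 2) : ℝ) : ℂ))
      atTop (𝓝 (Real.pi : ℂ)) := by
    have := (tendsto_main_term hγ ha hε).const_mul 2
    rw [mul_div_cancel₀ _ two_ne_zero] at this
    exact (Complex.continuous_ofReal.tendsto _).comp this
  have hsum := herr.add hmain
  rw [zero_add] at hsum
  refine hsum.congr' ?_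
  filter_upwards [eventually_ge_atTop 2] with k hk
  have herrint : IntervalIntegrable (err lam (model γ a) k) volume 0 ε := by
    rw [intervalIntegrable_iff_integrableOn_Ioc_of_le hε.le]
    have hg : IntegrableOn (fun ξ : ℝ =>
        2 * (a ^ 2 / 8) * (k * ξ * Real.exp (-(a ^ 2 / 4 / 2 * k * ξ ^ 2)))) (Set.Ioc 0 ε) :=
      (Continuous.continuousOn (by fun_prop)).integrableOn_Icc.mono_set Set.Ioc_subset_Icc_self
    refine hg.mono' ?_ ?_
    · refine ContinuousOn.aestronglyMeasurable ?_ measurableSet_Ioc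
      have hm := continuous_model γ a
      have c1 : ContinuousOn lam (Set.Ioc 0 ε) := hlamc.mono fun x hx =>
        ⟨by linarith [hx.1], by linarith [hx.2]⟩
      have c2 : ContinuousOn (fun x => lam (-x)) (Set.Ioc 0 ε) :=
        hlamc.comp continuous_neg.continuousOn fun x hx =>
          ⟨by linarith [hx.2], by linarith [hx.1]⟩
      have c3 : ContinuousOn (fun x : ℝ => I * (x : ℂ)) (Set.Ioc 0 ε) :=
        Continuous.continuousOn (by fun_prop)
      have c4 : ContinuousOn (fun x => model γ a (-x)) (Set.Ioc 0 ε) :=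
        (hm.comp continuous_neg).continuousOn
      have hne : ∀ x ∈ Set.Ioc 0 ε, I * (x : ℂ) ≠ 0 := fun x hx =>
        mul_ne_zero I_ne_zero (by exact_mod_cast hx.1.ne')
      exact (((c1.pow k).sub (hm.continuousOn.pow k)).div c3 hne).add
        (((c2.pow k).sub (c4.pow k)).div c3.neg fun x hx => neg_ne_zero.mpr (hne x hx))
    · filter_upwards [ae_restrict_mem measurableSet_Ioc] with ξ hξ
      refine norm_err_le (by positivity) hξ.1 (fun x hx => ?_) hk
      have hx2 : x ^ 2 = ξ ^ 2 := by rw [← hx, sq_abs]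
      rw [← hx2]
      refine hbd x (fun h0 => ?_) (hx.trans_lt (hξ.2.trans_lt hlt))
      simp [h0] at hx
      linarith [hξ.1]
  rw [← intervalIntegral.integral_const_mul, ← intervalIntegral.integral_ofReal,
    ← intervalIntegral.integral_add herrint]
  · refine intervalIntegral.integral_congr_ae (ae_of_all _ fun ξ hξ => ?_)
    rw [Set.uIoc_of_le hε.le] at hξ
    rw [← model_pow_combination γ a k hξ.1.ne', err]
    ring
  · have := Real.continuous_sinc
    exact Continuous.intervalIntegrable (by fun_prop) _ _

end Paper
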